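/- Let K, M ≥ 1, let p ∈ (0,1), y ∈ Δ^{K−1}, z ∈ Δ^{M−1}, and define 𝐩 ∈ Δ^{K+M−1} by 𝐩_j = (1−p)·y_j for 1 ≤ j ≤ K and 𝐩_{K+m} = p·z_m for 1 ≤ m ≤ M. Let a_g, a_b ∈ ℝ and let A ∈ ℝ^{K+M} have A_j = a_g for the first K (good) coordinates and A_{K+m} = a_b for the last M (bad) coordinates, and set Δr := a_b − a_g. Then with 𝔍(𝐩) = Diag(𝐩) − 𝐩𝐩ᵀ: (i) the components of the one-step field are (𝔍(𝐩)A)_j = −(1−p)·p·Δr·y_j for good indices j and (𝔍(𝐩)A)_{K+m} = p·(1−p)·Δr·z_m for bad indices m; (ii) the total drift of the bad mass under the squared-Jacobian (GRPO) field satisfies the exact identity Σ_{m=1}^M (𝔍(𝐩)²·A)_{K+m} = Δr·[p(1−p)]²·(∥y∥₂² + ∥z∥₂²). -/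

import Mathlib

open Finset

/-!
Subtracting the baseline `a_g` from the advantages does not change `𝔍 A`, because `𝔍` kills constant
vectors; hence `𝔍 A = Δr • 𝔍 𝟙`, where `𝟙` is the indicator of the bad arms. As `𝔍` is symmetric,
the drift of the bad mass is `𝟙 ⬝ 𝔍² A = 𝔍 𝟙 ⬝ 𝔍 A = Δr ‖𝔍 𝟙‖²`, and `𝔍 𝟙 = p (1 - p) (-y, z)`.
-/

open Matrix

theorem dotProduct_mul_self_mulVec_of_isSymm {R n : Type*} [CommSemiring R] [Fintype n]
    {S : Matrix n n R} (hS : S.IsSymm) (u v : n → R) :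
    u ⬝ᵥ (S * S) *ᵥ v = (S *ᵥ u) ⬝ᵥ (S *ᵥ v) := by
  rw [← mulVec_mulVec, dotProduct_mulVec, ← mulVec_transpose, hS.eq]

section SoftmaxJacobian

variable {R n : Type*} [CommRing R] [DecidableEq n]

/-- The Jacobian `Diag(p) - p pᵀ` of softmax, as a function of the output `p` of softmax. It is
defined for every vector `p`, normalized or not. -/
def softmaxJacobian (p : n → R) : Matrix n n R :=
  diagonal p - vecMulVec p p

theorem isSymm_softmaxJacobian (p : n → R) : (softmaxJacobian p).IsSymm :=
  (isSymm_diagonal p).sub (transpose_vecMulVec p p)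

variable [Fintype n]

theorem softmaxJacobian_mulVec_apply (p v : n → R) (i : n) :
    (softmaxJacobian p *ᵥ v) i = p i * (v i - p ⬝ᵥ v) := by
  simp [softmaxJacobian, sub_mulVec, mulVec_diagonal, vecMulVec_mulVec, mul_sub, mul_comm]

theorem softmaxJacobian_mulVec_add_const {p : n → R} (hp : ∑ i, p i = 1) (v : n → R) (c : R) :
    softmaxJacobian p *ᵥ (fun i => v i + c) = softmaxJacobian p *ᵥ v := by
  have hdot : p ⬝ᵥ (fun i => v i + c) = p ⬝ᵥ v + c := by
    simp only [dotProduct, mul_add, sum_add_distrib, ← sum_mul, hp, one_mul]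
  ext i
  rw [softmaxJacobian_mulVec_apply, softmaxJacobian_mulVec_apply, hdot, add_sub_add_right_eq_sub]

theorem softmaxJacobian_comp_equiv_mulVec {m : Type*} [Fintype m] [DecidableEq m] (p v : n → R)
    (e : m ≃ n) :
    softmaxJacobian (p ∘ e) *ᵥ (v ∘ e) = (softmaxJacobian p *ᵥ v) ∘ e := by
  ext i
  simp only [softmaxJacobian_mulVec_apply, Function.comp_apply, comp_equiv_dotProduct_comp_equiv]

end SoftmaxJacobian

section BlockPolicy

variable {R ι κ : Type*} [CommRing R]

/-- The policy `((1 - p) y, p z)` on good arms `ι` and bad arms `κ`: the bad arms carry total mass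
`p`, and `y`, `z` are the compositions within the two blocks. -/
def blockPolicy (p : R) (y : ι → R) (z : κ → R) : ι ⊕ κ → R :=
  Sum.elim (fun j => (1 - p) * y j) (fun m => p * z m)

variable [Fintype ι] [Fintype κ] (p : R) {y : ι → R} {z : κ → R}

theorem sum_blockPolicy (hy : ∑ j, y j = 1) (hz : ∑ m, z m = 1) :
    ∑ i, blockPolicy p y z i = 1 := by
  simp [blockPolicy, ← mul_sum, hy, hz]

variable [DecidableEq ι] [DecidableEq κ]

theorem softmaxJacobian_blockPolicy_mulVec_indicator (y : ι → R) (hz : ∑ m, z m = 1) :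
    softmaxJacobian (blockPolicy p y z) *ᵥ Sum.elim 0 1 = (p * (1 - p)) • Sum.elim (-y) z := by
  have hmass : blockPolicy p y z ⬝ᵥ Sum.elim 0 1 = p := by
    simp [blockPolicy, dotProduct, ← mul_sum, hz]
  ext (j | m) <;> rw [softmaxJacobian_mulVec_apply, hmass]
  · change (1 - p) * y j * (0 - p) = p * (1 - p) * -y j
    ring
  · change p * z m * (1 - p) = p * (1 - p) * z m
    ring

theorem softmaxJacobian_blockPolicy_mulVec_elim_const (hy : ∑ j, y j = 1) (hz : ∑ m, z m = 1)
    (ag ab : R) :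
    softmaxJacobian (blockPolicy p y z) *ᵥ Sum.elim (fun _ => ag) (fun _ => ab) =
      ((ab - ag) * (p * (1 - p))) • Sum.elim (-y) z := by
  have hbaseline : Sum.elim (fun _ : ι => ag) (fun _ : κ => ab) =
      fun i => ((ab - ag) • Sum.elim (0 : ι → R) (1 : κ → R)) i + ag := by
    ext (j | m) <;> simp
  rw [hbaseline, softmaxJacobian_mulVec_add_const (sum_blockPolicy p hy hz), mulVec_smul,
    softmaxJacobian_blockPolicy_mulVec_indicator p y hz, smul_smul]

theorem sum_softmaxJacobian_blockPolicy_mul_self_mulVec_inr (hy : ∑ j, y j = 1)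
    (hz : ∑ m, z m = 1) (ag ab : R) :
    ∑ m, ((softmaxJacobian (blockPolicy p y z) * softmaxJacobian (blockPolicy p y z)) *ᵥ
        Sum.elim (fun _ => ag) (fun _ => ab)) (Sum.inr m) =
      (ab - ag) * (p * (1 - p)) ^ 2 * (∑ j, y j ^ 2 + ∑ m, z m ^ 2) := by
  set J := softmaxJacobian (blockPolicy p y z)
  set A : ι ⊕ κ → R := Sum.elim (fun _ => ag) (fun _ => ab)
  calc ∑ m, ((J * J) *ᵥ A) (Sum.inr m)
      = Sum.elim 0 1 ⬝ᵥ (J * J) *ᵥ A := by simp [dotProduct]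
    _ = (J *ᵥ Sum.elim 0 1) ⬝ᵥ (J *ᵥ A) :=
      dotProduct_mul_self_mulVec_of_isSymm (isSymm_softmaxJacobian _) _ _
    _ = ((p * (1 - p)) • Sum.elim (-y) z) ⬝ᵥ
          (((ab - ag) * (p * (1 - p))) • Sum.elim (-y) z) := by
      rw [softmaxJacobian_blockPolicy_mulVec_indicator p y hz,
        softmaxJacobian_blockPolicy_mulVec_elim_const p hy hz]
    _ = (ab - ag) * (p * (1 - p)) ^ 2 * (Sum.elim (-y) z ⬝ᵥ Sum.elim (-y) z) := by
      rw [smul_dotProduct, dotProduct_smul, smul_eq_mul, smul_eq_mul]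
      ring
    _ = (ab - ag) * (p * (1 - p)) ^ 2 * (∑ j, y j ^ 2 + ∑ m, z m ^ 2) := by
      simp [dotProduct, sq]

end BlockPolicy

theorem append_comp_finSumFinEquiv {α : Type*} {K M : ℕ} (f : Fin K → α) (g : Fin M → α) :
    Fin.append f g ∘ finSumFinEquiv = Sum.elim f g :=
  Fin.append_comp_sumElim

theorem grpo_block_field_identities_general {R ι κ n : Type*} [CommRing R] [Fintype ι]
    [Fintype κ] [Fintype n] [DecidableEq n] (e : ι ⊕ κ ≃ n) (p : R) {y : ι → R} {z : κ → R}
    (hy : ∑ j, y j = 1) (hz : ∑ m, z m = 1) {ag ab Δr : R} (hΔr : Δr = ab - ag) {P A : n → R}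
    (hP : P ∘ e = blockPolicy p y z) (hA : A ∘ e = Sum.elim (fun _ => ag) (fun _ => ab)) :
    (∀ j, (softmaxJacobian P *ᵥ A) (e (Sum.inl j)) = -((1 - p) * p * Δr * y j)) ∧
    (∀ m, (softmaxJacobian P *ᵥ A) (e (Sum.inr m)) = p * (1 - p) * Δr * z m) ∧
    ∑ m, ((softmaxJacobian P * softmaxJacobian P) *ᵥ A) (e (Sum.inr m)) =
      Δr * (p * (1 - p)) ^ 2 * (∑ j, y j ^ 2 + ∑ m, z m ^ 2) := by
  classical
  have hfield : (softmaxJacobian P *ᵥ A) ∘ e = (Δr * (p * (1 - p))) • Sum.elim (-y) z := by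
    rw [← softmaxJacobian_comp_equiv_mulVec, hP, hA,
      softmaxJacobian_blockPolicy_mulVec_elim_const p hy hz, hΔr]
  have hgrpo : ((softmaxJacobian P * softmaxJacobian P) *ᵥ A) ∘ e =
      (softmaxJacobian (blockPolicy p y z) * softmaxJacobian (blockPolicy p y z)) *ᵥ
        Sum.elim (fun _ => ag) (fun _ => ab) := by
    simp only [← mulVec_mulVec, ← softmaxJacobian_comp_equiv_mulVec, hP, hA]
  refine ⟨fun j => ?_, fun m => ?_, ?_⟩
  · calc (softmaxJacobian P *ᵥ A) (e (Sum.inl j))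
        = (Δr * (p * (1 - p))) * -y j := congrFun hfield (Sum.inl j)
      _ = -((1 - p) * p * Δr * y j) := by ring
  · calc (softmaxJacobian P *ᵥ A) (e (Sum.inr m))
        = (Δr * (p * (1 - p))) * z m := congrFun hfield (Sum.inr m)
      _ = p * (1 - p) * Δr * z m := by ring
  · rw [hΔr, ← sum_softmaxJacobian_blockPolicy_mul_self_mulVec_inr p hy hz, ← hgrpo]
    rfl

/-- Block-symmetric GRPO field on the composite policy
`𝐩 = ((1−p)y, pz)` with advantage vector `A = (a_g,…,a_g, a_b,…,a_b)` and
`Δr = a_b − a_g`, `𝔍(𝐩) = Diag(𝐩) − 𝐩𝐩ᵀ`: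
(i) `(𝔍(𝐩)A)_j = −(1−p)p·Δr·y_j` on good indices and
`(𝔍(𝐩)A)_{K+m} = p(1−p)·Δr·z_m` on bad indices;
(ii) the total bad-mass drift under the squared-Jacobian (GRPO) field is
`Σ_m (𝔍(𝐩)²A)_{K+m} = Δr·[p(1−p)]²·(∥y∥₂² + ∥z∥₂²)`. -/
theorem grpo_block_field_identities {K M : ℕ} (hK : 1 ≤ K) (hM : 1 ≤ M)
    (p : ℝ) (hp : p ∈ Set.Ioo (0:ℝ) 1)
    (y : Fin K → ℝ) (hy : y ∈ stdSimplex ℝ (Fin K))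
    (z : Fin M → ℝ) (hz : z ∈ stdSimplex ℝ (Fin M))
    (ag ab Δr : ℝ) (hΔr : Δr = ab - ag)
    (P : Fin (K + M) → ℝ)
    (hP : P = Fin.append (fun j => (1 - p) * y j) (fun m => p * z m))
    (A : Fin (K + M) → ℝ)
    (hA : A = Fin.append (fun _ : Fin K => ag) (fun _ : Fin M => ab))
    (Jmat : Matrix (Fin (K + M)) (Fin (K + M)) ℝ)
    (hJ : Jmat = Matrix.diagonal P - Matrix.vecMulVec P P) :
    (∀ j : Fin K, Jmat.mulVec A (Fin.castAdd M j) = -((1 - p) * p * Δr * y j)) ∧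
    (∀ m : Fin M, Jmat.mulVec A (Fin.natAdd K m) = p * (1 - p) * Δr * z m) ∧
    (∑ m : Fin M, (Jmat * Jmat).mulVec A (Fin.natAdd K m) =
      Δr * (p * (1 - p)) ^ 2 * ((∑ j, y j ^ 2) + ∑ m, z m ^ 2)) := by
  obtain rfl : Jmat = softmaxJacobian P := hJ
  exact grpo_block_field_identities_general finSumFinEquiv p hy.2 hz.2 hΔr
    (hP ▸ append_comp_finSumFinEquiv _ _) (hA ▸ append_comp_finSumFinEquiv _ _)
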